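/- arXiv:1707.01151 — 2 statements merged into one kernel-verified Lean document; each statement's English description precedes it below -/
import Mathlib

section
/- For every (P', λ') ∈ P_d × (0,1) there exists an integer N ≥ 1 such that, for every sufficiently small ε > 0, every itinerary in I_N^ε = I_N^ε(P',λ') contains at least 3 distinct symbols among {1, …, d}. -/
open MeasureTheory Set Filter Metric

noncomputable section

/-- Planar cross product of two complex numbers viewed as vectors of `ℝ²`. -/
def cross (z w : ℂ) : ℝ := z.re * w.im - z.im * w.re

/-- `v` is the tuple of vertices of a convex `d`-gon, cyclically ordered
(counterclockwise): every vertex lies strictly to the left of every directed edge. -/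
def IsConvexPolygon {d : ℕ} [NeZero d] (v : Fin d → ℂ) : Prop :=
  ∀ i j : Fin d, j ≠ i → j ≠ i + 1 → 0 < cross (v (i + 1) - v i) (v j - v i)

/-- The polygon `P`, as a subset of the plane. -/
def polygonSet {d : ℕ} (v : Fin d → ℂ) : Set ℂ := convexHull ℝ (Set.range v)

/-- The open cone `A k`: points `z` outside `P` whose supporting line (oriented from `z`
towards the polygon, with the interior of `P` on its left) meets `P` exactly at the
vertex `v k`. -/
def cone {d : ℕ} (v : Fin d → ℂ) (k : Fin d) : Set ℂ :=
  {z | ∀ j : Fin d, j ≠ k → 0 < cross (v k - z) (v j - z)}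

/-- The singular set `S_P`: the points of `X = ℂ \ P` lying in no cone, i.e. whose
supporting line contains an edge of the polygon. -/
def singSet {d : ℕ} (v : Fin d → ℂ) : Set ℂ :=
  {z | z ∉ polygonSet v ∧ ∀ k : Fin d, z ∉ cone v k}

/-- The outer billiard map of the polygon with vertices `v` with contraction `lam`:
on the cone `A k` it is `z ↦ -lam • z + (1+lam) • v k` (extended arbitrarily outside
the union of the cones, which is its actual domain `X \ S_P`). -/
def billiardMap {d : ℕ} (v : Fin d → ℂ) (lam : ℝ) (z : ℂ) : ℂ :=
  haveI := Classical.propDecidable (∃ k : Fin d, z ∈ cone v k)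
  if h : ∃ k : Fin d, z ∈ cone v k then -(lam : ℂ) * z + (1 + (lam : ℂ)) * v h.choose
  else z

/-- A point is non-singular if its whole forward orbit stays in the union of the open
cones, i.e. never meets the singular set. -/
def NonSingular {d : ℕ} (v : Fin d → ℂ) (lam : ℝ) (z : ℂ) : Prop :=
  ∀ n : ℕ, (billiardMap v lam)^[n] z ∈ ⋃ k : Fin d, cone v k

/-- The ω-limit set of the forward orbit of `z` under `f`. -/
def omegaSet (f : ℂ → ℂ) (z : ℂ) : Set ℂ :=
  ⋂ m : ℕ, closure ((fun n : ℕ => f^[n] z) '' {n | m ≤ n})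

/-- The outer billiard map with contraction is asymptotically periodic: it has finitely
many periodic orbits (equivalently, periodic points) and the ω-limit set of every
non-singular point is a periodic orbit. -/
def AsymptoticallyPeriodic {d : ℕ} (v : Fin d → ℂ) (lam : ℝ) : Prop :=
  {z : ℂ | NonSingular v lam z ∧ ∃ p : ℕ, 1 ≤ p ∧ (billiardMap v lam)^[p] z = z}.Finite ∧
  ∀ z : ℂ, NonSingular v lam z → ∃ w : ℂ, NonSingular v lam w ∧
    (∃ p : ℕ, 1 ≤ p ∧ (billiardMap v lam)^[p] w = w) ∧
    omegaSet (billiardMap v lam) z = Set.range fun n : ℕ => (billiardMap v lam)^[n] w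

/-- The `ε`-neighbourhood `Δ_ε = B_ε(P') × (λ'-ε, λ'+ε)` of `(P', λ')`. -/
def Delta {d : ℕ} (v' : Fin d → ℂ) (l' ε : ℝ) : Set ((Fin d → ℂ) × ℝ) :=
  Metric.ball v' ε ×ˢ Set.Ioo (l' - ε) (l' + ε)

/-- `a_ε = λ' + ε`. -/
def aEps (l' ε : ℝ) : ℝ := l' + ε

/-- `b_ε = sup {‖P‖ : P ∈ B_ε(P')}` (sup-norm of the vertex tuple). -/
def bEps {d : ℕ} (v' : Fin d → ℂ) (ε : ℝ) : ℝ :=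
  sSup ((fun w : Fin d → ℂ => ‖w‖) '' Metric.ball v' ε)

/-- `r_ε = b_ε (1+a_ε)/(1-a_ε)²`. -/
def rEps {d : ℕ} (v' : Fin d → ℂ) (l' ε : ℝ) : ℝ :=
  bEps v' ε * (1 + aEps l' ε) / (1 - aEps l' ε) ^ 2

/-- `K_ε`: the closed disc of radius `r_ε` centred at the origin. -/
def Keps {d : ℕ} (v' : Fin d → ℂ) (l' ε : ℝ) : Set ℂ :=
  Metric.closedBall (0 : ℂ) (rEps v' l' ε)

/-- `(i 0, …, i (n-1))` is an admissible itinerary of order `n` of `T_{w,lam}`, the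
cones being restricted to `K_ε`: the corresponding intersection
`A_{i_0} ∩ T⁻¹(A_{i_1}) ∩ ⋯ ∩ T^{-(n-1)}(A_{i_{n-1}})` is non-empty. -/
def Admissible {d : ℕ} (v' : Fin d → ℂ) (l' ε : ℝ) (w : Fin d → ℂ) (lam : ℝ)
    {n : ℕ} (i : Fin n → Fin d) : Prop :=
  ∃ z : ℂ, ∀ j : Fin n, (billiardMap w lam)^[(j : ℕ)] z ∈ cone w (i j) ∩ Keps v' l' ε

/-- `I_n^ε`: the itineraries of order `n` admissible for some `(P, λ) ∈ Δ_ε`. -/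
def ItinSet {d : ℕ} (v' : Fin d → ℂ) (l' ε : ℝ) (n : ℕ) : Set (Fin n → Fin d) :=
  {i | ∃ q ∈ Delta v' l' ε, Admissible v' l' ε q.1 q.2 i}

/-- `H(P, λ, i) = (1+λ) ∑_{j=0}^{n-1} (-λ)^{n-j-1} v_{i_j}`. -/
def Hpt {d : ℕ} (w : Fin d → ℂ) (lam : ℝ) {n : ℕ} (i : Fin n → Fin d) : ℂ :=
  (1 + (lam : ℂ)) * ∑ j : Fin n, (-(lam : ℂ)) ^ (n - (j : ℕ) - 1) * w (i j)

/-- The limit set `Λ_ε(P,λ) = ⋂_{m ≥ 1} closure (⋃_{n ≥ m} {H(P,λ,i) : i ∈ I_n^ε})`. -/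
def LamSet {d : ℕ} (v' : Fin d → ℂ) (l' ε : ℝ) (w : Fin d → ℂ) (lam : ℝ) : Set ℂ :=
  ⋂ m : ℕ, ⋂ (_ : 1 ≤ m),
    closure {z : ℂ | ∃ n : ℕ, m ≤ n ∧ ∃ i ∈ ItinSet v' l' ε n, Hpt w lam i = z}

/-- `ω(P,λ)`: the union of the ω-limit sets of all non-singular points. -/
def omegaUnion {d : ℕ} (w : Fin d → ℂ) (lam : ℝ) : Set ℂ :=
  ⋃ z : ℂ, ⋃ (_ : NonSingular w lam z), omegaSet (billiardMap w lam) z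

/-!
On the cone of the vertex `a` the map is the homothety of centre `a` and ratio `-λ`, which moves a
point to the other side of `a`, where the polygon lies on the wrong side of the line through `a`:
consecutive symbols differ. An itinerary with only two symbols `a`, `b` therefore alternates
between them, and its even-time points converge at rate `λ²` to the 2-periodic point
`p = a + (b - a) / (1 - λ)` of the two homotheties. Both `p` and its image lie on the line
`ab`, on opposite sides of the segment, so a third vertex `c` would have
to be (almost) on the left of both directed lines `ab` and `ba`. Hence the cross product
of `b - a` and `c - a` is `O(λ^(2m))` after `2m` steps, which is impossible once `m`
is large, because non-collinear vertices stay uniformly non-collinear under perturbation.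
-/

open AffineMap (lineMap homothety lineMap_apply homothety_apply homothety_mul_apply)
open scoped Topology

section Cross

open ComplexConjugate

lemma cross_eq_im_conj_mul (z w : ℂ) : cross z w = (conj z * w).im := by
  simp [cross, sub_eq_add_neg]

lemma abs_cross_le (z w : ℂ) : |cross z w| ≤ ‖z‖ * ‖w‖ := by
  simpa [cross_eq_im_conj_mul] using Complex.abs_im_le_norm (conj z * w)

lemma cross_self_eq_zero (z : ℂ) : cross z z = 0 := by
  simp [cross, mul_comm]

lemma cross_eq_neg_cross (z w : ℂ) : cross w z = -cross z w := by
  simp only [cross]; ring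

lemma cross_smul_smul_self (r s : ℝ) (z : ℂ) : cross (r • z) (s • z) = 0 := by
  simp only [cross, Complex.smul_re, Complex.smul_im, smul_eq_mul]; ring

lemma exists_smul_eq_of_cross_eq_zero {z w : ℂ} (hz : z ≠ 0) (h : cross z w = 0) :
    ∃ r : ℝ, r • z = w := by
  have him : (w / z).im = 0 := by
    rw [Complex.div_im, ← sub_div, div_eq_zero_iff]
    left
    simpa only [cross, mul_comm] using h
  have hre : ((w / z).re : ℂ) = w / z := Complex.ext rfl him.symm
  exact ⟨(w / z).re, by rw [Complex.real_smul, hre, div_mul_cancel₀ w hz]⟩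

lemma cross_sub_homothety (a c z : ℂ) (r : ℝ) :
    cross (a - homothety a r z) (c - homothety a r z) = r * cross (a - z) (c - z) := by
  simp [cross, homothety_apply]; ring

lemma cross_sub_sub_lineMap (a b c z : ℂ) (t : ℝ) :
    cross (a - z) (c - z) =
      -(t * cross (b - a) (c - a)) - cross (z - lineMap a b t) (c - a) := by
  simp [cross, lineMap_apply]; ring

lemma cross_sub_homothety_lineMap (a b c z : ℂ) (r t : ℝ) :
    cross (b - homothety a r z) (c - homothety a r z) =
      (1 - r * t) * cross (b - a) (c - a) - r * cross (z - lineMap a b t) (c - b) := by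
  simp [cross, homothety_apply, lineMap_apply]; ring

end Cross

section AlternatingHomotheties

variable {k V P : Type*} [Field k] [AddCommGroup V] [Module k V] [AddTorsor V P]

lemma homothety_neg_homothety_neg (a b z : P) {r : k} (hr : r ≠ 1) :
    homothety b (-r) (homothety a (-r) z) = homothety (lineMap a b (1 - r)⁻¹) (r ^ 2) z := by
  have hr' : 1 - r ≠ 0 := sub_ne_zero.2 hr.symm
  obtain ⟨u, rfl⟩ : ∃ u : V, u +ᵥ a = b := ⟨b -ᵥ a, vsub_vadd b a⟩
  obtain ⟨x, rfl⟩ : ∃ x : V, x +ᵥ a = z := ⟨z -ᵥ a, vsub_vadd z a⟩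
  simp only [homothety_apply, lineMap_apply, vadd_vsub, vadd_vsub_vadd_cancel_right, vadd_vadd,
    vadd_right_cancel_iff]
  match_scalars <;> field_simp
  ring

lemma alternating_homothety_orbit {a b : P} {r : k} (hr : r ≠ 1) {Z : ℕ → P} {m : ℕ}
    (hZa : ∀ j < m, Z (2 * j + 1) = homothety a (-r) (Z (2 * j)))
    (hZb : ∀ j < m, Z (2 * j + 2) = homothety b (-r) (Z (2 * j + 1))) :
    Z (2 * m) = homothety (lineMap a b (1 - r)⁻¹) (r ^ (2 * m)) (Z 0) := by
  induction m with
  | zero => simp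
  | succ m ih =>
    have hm := ih (fun j hj => hZa j (by omega)) (fun j hj => hZb j (by omega))
    rw [Nat.mul_succ, hZb m m.lt_succ_self, hZa m m.lt_succ_self,
      homothety_neg_homothety_neg a b _ hr, hm, ← homothety_mul_apply, ← pow_add, add_comm]

end AlternatingHomotheties

section TwoVertices

variable {a b c z : ℂ} {lam : ℝ}

lemma abs_cross_le_mul_dist_lineMap {L : ℝ} (h0 : 0 ≤ lam) (h1 : lam < 1)
    (hca : ‖c - a‖ ≤ L) (hcb : ‖c - b‖ ≤ L) (ha : 0 ≤ cross (a - z) (c - z))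
    (hb : 0 ≤ cross (b - homothety a (-lam) z) (c - homothety a (-lam) z)) :
    |cross (b - a) (c - a)| ≤ (1 - lam) * dist z (lineMap a b (1 - lam)⁻¹) * L := by
  have hl : 0 < 1 - lam := sub_pos.2 h1
  set p : ℂ := lineMap a b (1 - lam)⁻¹ with hp
  have abs_error_le {x : ℂ} (hx : ‖c - x‖ ≤ L) :
      |(1 - lam) * cross (z - p) (c - x)| ≤ (1 - lam) * dist z p * L := by
    rw [abs_mul, abs_of_pos hl, mul_assoc, dist_eq_norm]
    have := abs_cross_le (z - p) (c - x)
    gcongr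
    exact this.trans (by gcongr)
  have upper : cross (b - a) (c - a) ≤ -((1 - lam) * cross (z - p) (c - a)) := by
    rw [cross_sub_sub_lineMap a b c z (1 - lam)⁻¹, ← hp] at ha
    have := mul_nonneg hl.le ha
    field_simp at this
    linarith
  have lower : -(lam * ((1 - lam) * cross (z - p) (c - b))) ≤ cross (b - a) (c - a) := by
    rw [cross_sub_homothety_lineMap a b c z (-lam) (1 - lam)⁻¹, ← hp] at hb
    have := mul_nonneg hl.le hb
    field_simp at this
    linarith
  have abs_lam_mul_le : |lam * ((1 - lam) * cross (z - p) (c - b))| ≤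
      (1 - lam) * dist z p * L := by
    rw [abs_mul, abs_of_nonneg h0]
    exact (mul_le_of_le_one_left (abs_nonneg _) h1.le).trans (abs_error_le hcb)
  exact abs_le.2 ⟨(neg_le_neg ((le_abs_self _).trans abs_lam_mul_le)).trans lower,
    upper.trans ((neg_le_abs _).trans (abs_error_le hca))⟩

lemma abs_cross_le_of_alternating_orbit {M R : ℝ} (h0 : 0 ≤ lam) (h1 : lam < 1) (ha : ‖a‖ ≤ M)
    (hb : ‖b‖ ≤ M) (hc : ‖c‖ ≤ M) {Z : ℕ → ℂ} (hZ : ‖Z 0‖ ≤ R) {m : ℕ}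
    (hZa : ∀ j ≤ m, Z (2 * j + 1) = homothety a (-lam) (Z (2 * j)))
    (hZb : ∀ j < m, Z (2 * j + 2) = homothety b (-lam) (Z (2 * j + 1)))
    (hca : 0 ≤ cross (a - Z (2 * m)) (c - Z (2 * m)))
    (hcb : 0 ≤ cross (b - Z (2 * m + 1)) (c - Z (2 * m + 1))) :
    |cross (b - a) (c - a)| ≤ lam ^ (2 * m) * ((R + 3 * M) * (2 * M)) := by
  have hl : 0 < 1 - lam := sub_pos.2 h1
  have dist_le {x y : ℂ} {r s : ℝ} (hx : ‖x‖ ≤ r) (hy : ‖y‖ ≤ s) : dist x y ≤ r + s :=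
    (dist_le_norm_add_norm x y).trans (add_le_add hx hy)
  have norm_c_sub_le {x : ℂ} (hx : ‖x‖ ≤ M) : ‖c - x‖ ≤ 2 * M := by
    rw [← dist_eq_norm, two_mul]
    exact dist_le hc hx
  set p : ℂ := lineMap a b (1 - lam)⁻¹ with hp
  have dist_start : (1 - lam) * dist (Z 0) p ≤ R + 3 * M := calc
    (1 - lam) * dist (Z 0) p ≤ (1 - lam) * (dist (Z 0) a + dist a p) := by
      gcongr; exact dist_triangle _ _ _
    _ = (1 - lam) * dist (Z 0) a + dist a b := by
      rw [hp, dist_left_lineMap, Real.norm_of_nonneg (inv_nonneg.2 hl.le)]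
      field_simp
    _ ≤ 1 * (R + M) + (M + M) := by
      gcongr
      exacts [sub_le_self 1 h0, dist_le hZ ha, dist_le ha hb]
    _ = R + 3 * M := by ring
  have dist_end : dist (Z (2 * m)) p = lam ^ (2 * m) * dist (Z 0) p := by
    rw [alternating_homothety_orbit h1.ne (fun j hj => hZa j hj.le) hZb, dist_homothety_center,
      Real.norm_of_nonneg (by positivity), dist_comm p]
  rw [hZa m le_rfl] at hcb
  calc |cross (b - a) (c - a)|
      ≤ (1 - lam) * dist (Z (2 * m)) p * (2 * M) :=
        abs_cross_le_mul_dist_lineMap h0 h1 (norm_c_sub_le ha) (norm_c_sub_le hb) hca hcb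
    _ = lam ^ (2 * m) * ((1 - lam) * dist (Z 0) p * (2 * M)) := by rw [dist_end]; ring
    _ ≤ lam ^ (2 * m) * ((R + 3 * M) * (2 * M)) := by
      have : 0 ≤ M := (norm_nonneg a).trans ha
      gcongr

end TwoVertices

section Cones

variable {d : ℕ} {v : Fin d → ℂ} {k l : Fin d} {z : ℂ}

lemma cross_nonneg_of_mem_cone (hz : z ∈ cone v k) (j : Fin d) :
    0 ≤ cross (v k - z) (v j - z) := by
  rcases eq_or_ne j k with rfl | hjk
  · exact (cross_self_eq_zero _).ge
  · exact (hz j hjk).le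

lemma eq_of_mem_cone (hk : z ∈ cone v k) (hl : z ∈ cone v l) : k = l := by
  by_contra hkl
  have := hk l (Ne.symm hkl)
  rw [cross_eq_neg_cross] at this
  linarith [hl k hkl]

lemma homothety_notMem_cone [Nontrivial (Fin d)] {r : ℝ} (hr : r ≤ 0) (hz : z ∈ cone v k) :
    homothety (v k) r z ∉ cone v k := by
  intro hrz
  obtain ⟨j, hj⟩ := exists_ne k
  have := hrz j hj
  rw [cross_sub_homothety] at this
  exact this.not_ge (mul_nonpos_of_nonpos_of_nonneg hr (hz j hj).le)

lemma billiardMap_eq_homothety (lam : ℝ) (hz : z ∈ cone v k) :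
    billiardMap v lam z = homothety (v k) (-lam) z := by
  have h : ∃ k, z ∈ cone v k := ⟨k, hz⟩
  rw [billiardMap, dif_pos h, eq_of_mem_cone h.choose_spec hz, homothety_apply]
  simp only [vsub_eq_sub, vadd_eq_add, Complex.real_smul, Complex.ofReal_neg]
  ring

end Cones

lemma eq_apply_mod_two {α : Type*} {s : ℕ → α} {N : ℕ}
    (hs : ∀ n, n + 2 < N → s (n + 2) = s n) {n : ℕ} (hn : n < N) : s n = s (n % 2) := by
  induction n using Nat.twoStepInduction with
  | zero | one => rfl
  | more n ih _ => rw [hs n hn, ih (by omega), Nat.add_mod_right]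

theorem exists_three_consecutive_symbols {d : ℕ} [Nontrivial (Fin d)] {w : Fin d → ℂ}
    {lam M R : ℝ} (hlam : lam ∈ Ioo 0 1) (hw : ‖w‖ ≤ M) {z : ℂ} (hz : ‖z‖ ≤ R) {m : ℕ}
    (hwide : ∀ a b, a ≠ b → ∃ c, lam ^ (2 * m) * ((R + 3 * M) * (2 * M)) <
      |cross (w b - w a) (w c - w a)|)
    {s : ℕ → Fin d} (hs : ∀ n < 2 * m + 2, (billiardMap w lam)^[n] z ∈ cone w (s n)) :
    ∃ n < 2 * m, s n ≠ s (n + 1) ∧ s (n + 1) ≠ s (n + 2) ∧ s n ≠ s (n + 2) := by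
  set Z : ℕ → ℂ := fun n => (billiardMap w lam)^[n] z
  have step (n : ℕ) (hn : n < 2 * m + 2) : Z (n + 1) = homothety (w (s n)) (-lam) (Z n) :=
    (Function.iterate_succ_apply' _ n z).trans (billiardMap_eq_homothety lam (hs n hn))
  have consecutive_ne (n : ℕ) (hn : n + 1 < 2 * m + 2) : s n ≠ s (n + 1) := by
    intro heq
    have hmem := hs (n + 1) hn
    rw [← heq] at hmem
    refine homothety_notMem_cone (neg_nonpos.2 hlam.1.le) (hs n (by omega)) ?_
    exact step n (by omega) ▸ hmem
  by_contra! hthree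
  have two_periodic (n : ℕ) (hn : n + 2 < 2 * m + 2) : s (n + 2) = s n :=
    (hthree n (by omega) (consecutive_ne n (by omega)) (consecutive_ne (n + 1) hn)).symm
  have even (j : ℕ) (hj : j ≤ m) : s (2 * j) = s 0 := by
    simpa using eq_apply_mod_two two_periodic (n := 2 * j) (by omega)
  have odd (j : ℕ) (hj : j ≤ m) : s (2 * j + 1) = s 1 := by
    simpa [Nat.add_mod] using eq_apply_mod_two two_periodic (n := 2 * j + 1) (by omega)
  have norm_le (k : Fin d) : ‖w k‖ ≤ M := (norm_le_pi_norm w k).trans hw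
  obtain ⟨c, hc⟩ := hwide (s 0) (s 1) (consecutive_ne 0 (by omega))
  refine hc.not_ge (abs_cross_le_of_alternating_orbit hlam.1.le hlam.2 (norm_le _) (norm_le _)
    (norm_le c) (Z := Z) hz (fun j hj => ?_) (fun j hj => ?_) ?_ ?_)
  · rw [step _ (by omega), even j hj]
  · rw [step _ (by omega), odd j hj.le]
  · simpa only [even m le_rfl] using cross_nonneg_of_mem_cone (hs (2 * m) (by omega)) c
  · simpa only [odd m le_rfl] using cross_nonneg_of_mem_cone (hs (2 * m + 1) (by omega)) c

section Noncollinear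

variable {ι : Type*} {v : ι → ℂ}

lemma exists_cross_ne_zero (hv : ¬ Collinear ℝ (range v)) {a b : ι} (hab : v a ≠ v b) :
    ∃ c, cross (v b - v a) (v c - v a) ≠ 0 := by
  contrapose! hv
  refine (collinear_iff_of_mem (mem_range_self a)).2 ⟨v b - v a, ?_⟩
  rintro _ ⟨c, rfl⟩
  obtain ⟨r, hr⟩ := exists_smul_eq_of_cross_eq_zero (sub_ne_zero.2 hab.symm) (hv c)
  exact ⟨r, by rw [hr, vadd_eq_add, sub_add_cancel]⟩

lemma cross_eq_zero_of_collinear {t : Set ℂ} (ht : Collinear ℝ t) {a b c : ℂ} (ha : a ∈ t)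
    (hb : b ∈ t) (hc : c ∈ t) : cross (b - a) (c - a) = 0 := by
  obtain ⟨u, hu⟩ := (collinear_iff_of_mem ha).1 ht
  obtain ⟨r, rfl⟩ := hu b hb
  obtain ⟨s, rfl⟩ := hu c hc
  simp only [vadd_eq_add, add_sub_cancel_right, cross_smul_smul_self]

lemma eventually_exists_lt_abs_cross [Finite ι] (hinj : Function.Injective v)
    (hv : ¬ Collinear ℝ (range v)) :
    ∃ δ > 0, ∀ᶠ w in 𝓝 v, ∀ a b, a ≠ b → ∃ c, δ < |cross (w b - w a) (w c - w a)| := by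
  have hpos (a b : ι) (hab : a ≠ b) : ∃ c, 0 < |cross (v b - v a) (v c - v a)| :=
    (exists_cross_ne_zero hv (hinj.ne hab)).imp fun _ => abs_pos.2
  choose! c hc using hpos
  have hδ : ∀ᶠ δ in 𝓝[>] (0 : ℝ), ∀ a b, a ≠ b →
      δ < |cross (v b - v a) (v (c a b) - v a)| := by
    simp only [eventually_all]
    exact fun a b hab => eventually_nhdsWithin_of_eventually_nhds (eventually_lt_nhds (hc a b hab))
  obtain ⟨δ, hδ, hδ0⟩ := (hδ.and self_mem_nhdsWithin).exists
  have hnear : ∀ᶠ w in 𝓝 v, ∀ a b, a ≠ b → δ < |cross (w b - w a) (w (c a b) - w a)| := by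
    simp only [eventually_all]
    intro a b hab
    have hcont : Continuous fun w : ι → ℂ => |cross (w b - w a) (w (c a b) - w a)| := by
      unfold cross
      fun_prop
    exact hcont.continuousAt.eventually_const_lt (hδ a b hab)
  exact ⟨δ, hδ0, hnear.mono fun w hw a b hab => ⟨c a b, hw a b hab⟩⟩

end Noncollinear

namespace IsConvexPolygon

variable {d : ℕ} [NeZero d] {v : Fin d → ℂ}

lemma injective (hd : 3 ≤ d) (hv : IsConvexPolygon v) : Function.Injective v := by
  intro a b hab
  by_contra hne
  by_cases hb : b = a + 1
  · obtain ⟨c, hca, hcb⟩ := Fin.exists_ne_and_ne_of_two_lt a b hd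
    have := hv a c hca (hb ▸ hcb)
    simp [← hb, hab, cross] at this
  · have := hv a b (Ne.symm hne) hb
    simp [hab, cross] at this

lemma not_collinear (hd : 3 ≤ d) (hv : IsConvexPolygon v) : ¬ Collinear ℝ (range v) := by
  intro hcol
  obtain ⟨c, hc0, hc1⟩ := Fin.exists_ne_and_ne_of_two_lt (0 : Fin d) (0 + 1) hd
  exact (hv 0 c hc0 hc1).ne' (cross_eq_zero_of_collinear hcol (mem_range_self _)
    (mem_range_self _) (mem_range_self _))

end IsConvexPolygon

section Neighbourhoods

variable {d : ℕ} {v : Fin d → ℂ} {l : ℝ}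

lemma eventually_forall_mem_Delta {p : (Fin d → ℂ) × ℝ → Prop} (hp : ∀ᶠ q in 𝓝 (v, l), p q) :
    ∀ᶠ ε in 𝓝[>] (0 : ℝ), ∀ q ∈ Delta v l ε, p q := by
  obtain ⟨η, hη, hball⟩ := Metric.eventually_nhds_iff_ball.1 hp
  filter_upwards [Ioo_mem_nhdsGT hη] with ε hε q hq
  rw [Delta, ← Real.ball_eq_Ioo, ball_prod_same] at hq
  exact hball q (ball_subset_ball hε.2.le hq)

lemma tendsto_bEps : Tendsto (bEps v) (𝓝[>] 0) (𝓝 ‖v‖) := by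
  have norm_le {ε : ℝ} {w : Fin d → ℂ} (hw : w ∈ ball v ε) : ‖w‖ ≤ ‖v‖ + ε :=
    (norm_lt_of_mem_ball hw).le
  have hadd : Tendsto (fun ε : ℝ => ‖v‖ + ε) (𝓝[>] 0) (𝓝 ‖v‖) :=
    tendsto_nhdsWithin_of_tendsto_nhds ((continuous_const_add ‖v‖).tendsto' 0 _ (add_zero _))
  refine tendsto_of_tendsto_of_tendsto_of_le_of_le' tendsto_const_nhds hadd ?_ ?_ <;>
    filter_upwards [self_mem_nhdsWithin] with ε hε
  · exact le_csSup ⟨‖v‖ + ε, forall_mem_image.2 fun w => norm_le⟩ ⟨v, mem_ball_self hε, rfl⟩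
  · exact csSup_le ⟨_, v, mem_ball_self hε, rfl⟩ (forall_mem_image.2 fun w => norm_le)

lemma tendsto_rEps (hl : l ≠ 1) :
    Tendsto (rEps v l) (𝓝[>] 0) (𝓝 (‖v‖ * (1 + l) / (1 - l) ^ 2)) := by
  have ha : Tendsto (aEps l) (𝓝[>] 0) (𝓝 l) :=
    tendsto_nhdsWithin_of_tendsto_nhds ((continuous_const_add l).tendsto' 0 _ (add_zero _))
  exact (tendsto_bEps.mul (ha.const_add 1)).div ((ha.const_sub 1).pow 2)
    (pow_ne_zero 2 (sub_ne_zero.2 hl.symm))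

end Neighbourhoods

lemma Admissible.exists_three_symbols {d : ℕ} [Nontrivial (Fin d)] {v w : Fin d → ℂ}
    {l ε lam M R : ℝ} {m : ℕ} {i : Fin (2 * m + 2) → Fin d} (hi : Admissible v l ε w lam i)
    (hlam : lam ∈ Ioo 0 1) (hw : ‖w‖ ≤ M) (hR : rEps v l ε ≤ R)
    (hwide : ∀ a b, a ≠ b → ∃ c, lam ^ (2 * m) * ((R + 3 * M) * (2 * M)) <
      |cross (w b - w a) (w c - w a)|) :
    ∃ j₁ j₂ j₃, i j₁ ≠ i j₂ ∧ i j₂ ≠ i j₃ ∧ i j₁ ≠ i j₃ := by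
  obtain ⟨z, hz⟩ := hi
  have hcone (n : ℕ) (hn : n < 2 * m + 2) :
      (billiardMap w lam)^[n] z ∈ cone w (i (Fin.ofNat _ n)) := by
    simpa only [Fin.val_ofNat, Nat.mod_eq_of_lt hn] using (hz (Fin.ofNat _ n)).1
  have hzR : ‖z‖ ≤ R := (mem_closedBall_zero_iff.1 (hz 0).2).trans hR
  obtain ⟨n, -, hn⟩ := exists_three_consecutive_symbols hlam hw hzR hwide hcone
  exact ⟨_, _, _, hn⟩

lemma exists_eventually_pow_mul_lt_abs_cross {ι : Type*} [Finite ι] {v : ι → ℂ}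
    (hinj : Function.Injective v) (hv : ¬ Collinear ℝ (range v)) {l : ℝ} (hl : |l| < 1) (K : ℝ) :
    ∃ m : ℕ, ∀ᶠ q : (ι → ℂ) × ℝ in 𝓝 (v, l), ∀ a b, a ≠ b →
      ∃ c, q.2 ^ (2 * m) * K < |cross (q.1 b - q.1 a) (q.1 c - q.1 a)| := by
  obtain ⟨δ, hδ, hwide⟩ := eventually_exists_lt_abs_cross hinj hv
  have hlim : Tendsto (fun m : ℕ => l ^ (2 * m) * K) atTop (𝓝 0) := by
    have hsq : |l ^ 2| < 1 := by rwa [abs_pow, sq_lt_one_iff₀ (abs_nonneg l)]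
    simpa only [pow_mul, zero_mul] using (tendsto_pow_atTop_nhds_zero_iff.2 hsq).mul_const K
  obtain ⟨m, hm⟩ := (hlim.eventually_lt_const hδ).exists
  have hpow : ∀ᶠ lam in 𝓝 l, lam ^ (2 * m) * K < δ :=
    ((continuous_pow (2 * m)).mul_const K).continuousAt.eventually_lt_const hm
  rw [nhds_prod_eq]
  exact ⟨m, (hwide.prod_mk hpow).mono fun q hq a b hab =>
    (hq.1 a b hab).imp fun _ => hq.2.trans⟩

theorem itinerary_three_symbols_general {d : ℕ} {v : Fin d → ℂ} (hinj : Function.Injective v)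
    (hv : ¬ Collinear ℝ (range v)) {l : ℝ} (hl : l ∈ Ioo (0 : ℝ) 1) :
    ∃ N : ℕ, 1 ≤ N ∧ ∃ ε₀ : ℝ, 0 < ε₀ ∧ ∀ ε : ℝ, 0 < ε → ε < ε₀ →
      ∀ i ∈ ItinSet v l ε N, ∃ j₁ j₂ j₃ : Fin N,
        i j₁ ≠ i j₂ ∧ i j₂ ≠ i j₃ ∧ i j₁ ≠ i j₃ := by
  have : Nontrivial (Fin d) := by
    by_contra h
    rw [not_nontrivial_iff_subsingleton] at h
    exact hv ((subsingleton_range v).induction_on (collinear_empty ℝ ℂ) (collinear_singleton ℝ))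
  obtain ⟨M, hM⟩ := exists_gt ‖v‖
  obtain ⟨R, hR⟩ := exists_gt (‖v‖ * (1 + l) / (1 - l) ^ 2)
  obtain ⟨m, hwide⟩ := exists_eventually_pow_mul_lt_abs_cross hinj hv
    ((abs_of_pos hl.1).trans_lt hl.2) ((R + 3 * M) * (2 * M))
  have hlam : ∀ᶠ q : (Fin d → ℂ) × ℝ in 𝓝 (v, l), q.2 ∈ Ioo 0 1 :=
    continuous_snd.continuousAt.eventually_mem (Ioo_mem_nhds hl.1 hl.2)
  have hw : ∀ᶠ q : (Fin d → ℂ) × ℝ in 𝓝 (v, l), ‖q.1‖ < M :=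
    continuous_fst.norm.continuousAt.eventually_lt_const hM
  have hsmall : ∀ᶠ ε in 𝓝[>] (0 : ℝ), ∀ i ∈ ItinSet v l ε (2 * m + 2),
      ∃ j₁ j₂ j₃, i j₁ ≠ i j₂ ∧ i j₂ ≠ i j₃ ∧ i j₁ ≠ i j₃ := by
    filter_upwards [eventually_forall_mem_Delta (hlam.and (hw.and hwide)),
      (tendsto_rEps hl.2.ne).eventually_lt_const hR] with ε hq hr i ⟨q, hqΔ, hi⟩
    obtain ⟨hlam, hw, hwide⟩ := hq q hqΔ
    exact hi.exists_three_symbols hlam hw.le hr.le hwide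
  obtain ⟨ε₀, hε₀, hIoo⟩ := mem_nhdsGT_iff_exists_Ioo_subset.1 hsmall
  exact ⟨2 * m + 2, by omega, ε₀, hε₀, fun ε h0 hε => hIoo ⟨h0, hε⟩⟩

/-- There is an integer `N ≥ 1` such that, for every sufficiently small `ε > 0`, every
itinerary of `I_N^ε` contains at least 3 distinct symbols. -/
theorem itinerary_three_symbols (d : ℕ) [NeZero d] (hd : 3 ≤ d) (vP : Fin d → ℂ)
    (lP : ℝ) (hconv : IsConvexPolygon vP) (hl : lP ∈ Set.Ioo (0 : ℝ) 1) :
    ∃ N : ℕ, 1 ≤ N ∧ ∃ ε₀ : ℝ, 0 < ε₀ ∧ ∀ ε : ℝ, 0 < ε → ε < ε₀ →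
      ∀ i ∈ ItinSet vP lP ε N, ∃ j₁ j₂ j₃ : Fin N,
        i j₁ ≠ i j₂ ∧ i j₂ ≠ i j₃ ∧ i j₁ ≠ i j₃ :=
  itinerary_three_symbols_general (hconv.injective hd) (hconv.not_collinear hd) hl
end
end

section
/- Let (P, λ) ∈ Δ_ε. If Λ_ε(P,λ) ∩ S_P = ∅, then the outer billiard map T_{P,λ} is asymptotically periodic. -/
open MeasureTheory Set Filter Metric

noncomputable section

/-!
Let `Ω` be the set of limits of late orbit points of non-singular points starting in a disc that
absorbs every orbit; `Ω` is contained in `Λ_ε`, so it misses `S_P`. It also misses `P`: a point of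
`Ω ∩ P` has two successive preimages in `Ω`, reached through the branches `z ↦ -λz + (1+λ)v_k` of
two consecutive cones. A limit of points of `A_k` that lies off `S_P` and is sent into `P` can only
be `v_k`, the fixed point of its branch, so both preimages equal the same vertex, whereas the image
of a point of `A_k` never lies in `A_k`. Hence the compact set `Ω` is covered by the open cones, and
by Lebesgue's number lemma orbits eventually stay a uniform distance `δ` inside them. Two such
orbits that come `δ`-close stay in common cones and approach each other geometrically. So distinct
periodic points are `δ`-separated, and an orbit that returns `δ`-close to itself converges to a
periodic orbit.
-/

open scoped Topology NNReal

section Iteration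

variable {X : Type*} {f : X → X}

lemma eventually_iterate_iterate_iff {P : X → Prop} {x : X} (N : ℕ) :
    (∀ᶠ n in atTop, P (f^[n] (f^[N] x))) ↔ ∀ᶠ n in atTop, P (f^[n] x) := by
  simp only [← Function.iterate_add_apply]
  rw [← eventually_map (m := (· + N)) (P := fun n => P (f^[n] x)), map_add_atTop_eq_nat]

lemma forall_iterate_of_isPeriodicPt {P : X → Prop} {x : X} {p : ℕ} (hp : 0 < p)
    (hx : Function.IsPeriodicPt f p x) (h : ∀ᶠ n in atTop, P (f^[n] x)) (n : ℕ) :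
    P (f^[n] x) := by
  obtain ⟨N, hN⟩ := eventually_atTop.1 h
  have hreturn : f^[n + N * p] x = f^[n] x := by
    rw [Function.iterate_add_apply, (hx.const_mul N).eq]
  exact hreturn ▸ hN _ ((Nat.le_mul_of_pos_right N hp).trans (Nat.le_add_left _ n))

lemma exists_lt_dist_iterate_lt [PseudoMetricSpace X] {K : Set X} (hK : IsCompact K) {x : X}
    (h : ∀ᶠ n in atTop, f^[n] x ∈ K) {δ : ℝ} (hδ : 0 < δ) (N : ℕ) :
    ∃ m ≥ N, ∃ n > m, dist (f^[m] x) (f^[n] x) < δ := by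
  obtain ⟨a, -, ha⟩ := hK.exists_mapClusterPt_of_frequently h.frequently
  have hnear : ∃ᶠ n in atTop, f^[n] x ∈ ball a (δ / 2) :=
    ha.frequently (ball_mem_nhds a (half_pos hδ))
  obtain ⟨m, hm, hNm⟩ := (hnear.and_eventually (eventually_ge_atTop N)).exists
  obtain ⟨n, hn, hmn⟩ := (hnear.and_eventually (eventually_gt_atTop m)).exists
  refine ⟨m, hNm, n, hmn, ?_⟩
  rw [mem_ball] at hm hn
  linarith [dist_triangle_right (f^[m] x) (f^[n] x) a]

end Iteration

section OmegaLimit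

lemma exists_ultrafilter_of_mem_omegaLimit {τ α X : Type*} [TopologicalSpace X] {l : Filter τ}
    {ϕ : τ → α → X} {s : Set α} {x : X} (hx : x ∈ omegaLimit l ϕ s) :
    ∃ F : Ultrafilter (τ × α), Tendsto Prod.fst (F : Filter (τ × α)) l ∧
      (∀ᶠ q in (F : Filter (τ × α)), q.2 ∈ s) ∧
      Tendsto (fun q : τ × α => ϕ q.1 q.2) F (𝓝 x) := by
  have hcluster : MapClusterPt x (l ×ˢ 𝓟 s) (fun q : τ × α => ϕ q.1 q.2) := by
    refine mapClusterPt_iff_frequently.2 fun V hV hev => ?_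
    rw [eventually_prod_principal_iff] at hev
    exact (mem_omegaLimit_iff_frequently l ϕ s x).1 hx V hV
      (hev.mono fun t ht ⟨a, has, haV⟩ => ht a has haV)
  obtain ⟨F, hF, hlim⟩ := mapClusterPt_iff_ultrafilter.1 hcluster
  exact ⟨F, tendsto_fst.mono_left hF,
    (tendsto_snd.mono_left hF).eventually (mem_principal_self s), hlim⟩

lemma mem_omegaLimit_of_tendsto {τ α β X : Type*} [TopologicalSpace X] {l : Filter τ}
    {ϕ : τ → α → X} {s : Set α} {F : Filter β} [F.NeBot] {t : β → τ} {a : β → α} {x : X}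
    (ht : Tendsto t F l) (ha : ∀ᶠ b in F, a b ∈ s)
    (hx : Tendsto (fun b => ϕ (t b) (a b)) F (𝓝 x)) : x ∈ omegaLimit l ϕ s := by
  refine mem_iInter₂.2 fun u hu => mem_closure_of_tendsto hx ?_
  filter_upwards [ht hu, ha] with b htb hab using mem_image2_of_mem htb hab

lemma exists_ball_subset_of_omegaLimit_subset_iUnion {τ α X ι : Type*} [MetricSpace X]
    {l : Filter τ} {ϕ : τ → α → X} {s : Set α} {K : Set X} {U : ι → Set X} (hK : IsCompact K)
    (hϕ : ∀ᶠ t in l, MapsTo (ϕ t) s K) (hU : ∀ i, IsOpen (U i))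
    (hcover : omegaLimit l ϕ s ⊆ ⋃ i, U i) :
    ∃ δ > 0, ∀ᶠ t in l, ∀ x ∈ s, ∃ i, ball (ϕ t x) δ ⊆ U i := by
  have hsub : omegaLimit l ϕ s ⊆ K := (omegaLimit_subset_closure_image2 l ϕ s hϕ).trans
    (closure_minimal (image2_subset_iff.2 fun _ ht => ht) hK.isClosed)
  obtain ⟨δ, hδ, hball⟩ := lebesgue_number_lemma_of_metric
    (hK.of_isClosed_subset (isClosed_omegaLimit l ϕ s) hsub) hU hcover
  refine ⟨δ / 2, half_pos hδ, ?_⟩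
  filter_upwards [eventually_mapsTo_of_isCompact_absorbing_of_isOpen_of_omegaLimit_subset l ϕ s hK
    hϕ isOpen_thickening (self_subset_thickening (half_pos hδ) _)] with t ht x hx
  obtain ⟨y, hy, hxy⟩ := mem_thickening_iff.1 (ht hx)
  obtain ⟨i, hi⟩ := hball y hy
  exact ⟨i, (ball_subset_ball' (by linarith)).trans hi⟩

lemma mem_omegaSet_iff {f : ℂ → ℂ} {z x : ℂ} :
    x ∈ omegaSet f z ↔ MapClusterPt x atTop fun n => f^[n] z := by
  rw [mapClusterPt_atTop_iff_forall_mem_closure]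
  exact mem_iInter

lemma omegaSet_iterate (f : ℂ → ℂ) (N : ℕ) (z : ℂ) : omegaSet f (f^[N] z) = omegaSet f z := by
  ext x
  simp only [mem_omegaSet_iff, mapClusterPt_iff_frequently, Filter.Frequently]
  exact forall₂_congr fun V _ => not_congr (eventually_iterate_iterate_iff (P := (· ∉ V)) N)

lemma omegaSet_subset_of_tendsto_dist {f : ℂ → ℂ} {z w : ℂ}
    (h : Tendsto (fun n => dist (f^[n] z) (f^[n] w)) atTop (𝓝 0)) :
    omegaSet f z ⊆ omegaSet f w := by
  intro x hx
  obtain ⟨F, hF, hlim⟩ := mapClusterPt_iff_ultrafilter.1 (mem_omegaSet_iff.1 hx)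
  exact mem_omegaSet_iff.2
    (mapClusterPt_iff_ultrafilter.2 ⟨F, hF, hlim.congr_dist (h.mono_left hF)⟩)

lemma omegaSet_eq_of_tendsto_dist {f : ℂ → ℂ} {z w : ℂ}
    (h : Tendsto (fun n => dist (f^[n] z) (f^[n] w)) atTop (𝓝 0)) :
    omegaSet f z = omegaSet f w :=
  (omegaSet_subset_of_tendsto_dist h).antisymm
    (omegaSet_subset_of_tendsto_dist (by simpa only [dist_comm] using h))

lemma omegaSet_of_isPeriodicPt {f : ℂ → ℂ} {w : ℂ} {p : ℕ} (hp : 0 < p)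
    (hw : Function.IsPeriodicPt f p w) : omegaSet f w = range fun n => f^[n] w := by
  have hfinite : (range fun n => f^[n] w).Finite := by
    refine ((finite_Iio p).image fun n => f^[n] w).subset ?_
    rintro _ ⟨n, rfl⟩
    exact ⟨n % p, Nat.mod_lt _ hp, hw.iterate_mod_apply n⟩
  refine Subset.antisymm (fun x hx => ?_) ?_
  · rw [← hfinite.isClosed.closure_eq]
    exact closure_mono (image_subset_range _ _) (mem_iInter.1 hx 0)
  · rintro _ ⟨n, rfl⟩
    refine mem_iInter.2 fun m => subset_closure ⟨n + m * p, ?_, ?_⟩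
    · exact (Nat.le_mul_of_pos_right m hp).trans (Nat.le_add_left _ n)
    · simp only [Function.iterate_add_apply, (hw.const_mul m).eq]

end OmegaLimit

section PiecewiseContraction

variable {X ι : Type*} [MetricSpace X] {f : X → X} {U : ι → Set X} {c : ℝ≥0} {δ : ℝ} {x y : X}

/-- The points whose whole forward orbit under `f` stays `δ`-deep inside the cells `U i`: each
`δ`-ball around an orbit point lies in a single cell. -/
def deepSet (f : X → X) (U : ι → Set X) (δ : ℝ) : Set X :=
  {x | ∀ n, ∃ i, ball (f^[n] x) δ ⊆ U i}

lemma iterate_mem_deepSet (hx : x ∈ deepSet f U δ) (m : ℕ) : f^[m] x ∈ deepSet f U δ := by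
  intro n
  rw [← Function.iterate_add_apply]
  exact hx (n + m)

lemma eventually_iterate_mem_deepSet (h : ∀ᶠ n in atTop, ∃ i, ball (f^[n] x) δ ⊆ U i) :
    ∀ᶠ n in atTop, f^[n] x ∈ deepSet f U δ := by
  filter_upwards [eventually_forall_ge_atTop.2 h] with n hn m
  rw [← Function.iterate_add_apply]
  exact hn _ (Nat.le_add_left n m)

lemma dist_iterate_le_of_mem_deepSet (hf : ∀ i, LipschitzOnWith c f (U i)) (hc : c ≤ 1)
    (hx : x ∈ deepSet f U δ) (hxy : dist x y < δ) (n : ℕ) :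
    dist (f^[n] x) (f^[n] y) ≤ c ^ n * dist x y := by
  induction n with
  | zero => simp
  | succ n ih =>
    obtain ⟨i, hi⟩ := hx n
    have hclose : dist (f^[n] x) (f^[n] y) < δ :=
      (ih.trans (mul_le_of_le_one_left dist_nonneg (pow_le_one₀ c.2 hc))).trans_lt hxy
    have hcell := (hf i).dist_le_mul _ (hi (mem_ball_self (dist_nonneg.trans_lt hxy))) _
      (hi (mem_ball'.2 hclose))
    rw [Function.iterate_succ_apply', Function.iterate_succ_apply', pow_succ', mul_assoc]
    exact hcell.trans (mul_le_mul_of_nonneg_left ih c.2)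

lemma dist_iterate_le_dist_of_mem_deepSet (hf : ∀ i, LipschitzOnWith c f (U i)) (hc : c ≤ 1)
    (hx : x ∈ deepSet f U δ) (hxy : dist x y < δ) (n : ℕ) :
    dist (f^[n] x) (f^[n] y) ≤ dist x y :=
  (dist_iterate_le_of_mem_deepSet hf hc hx hxy n).trans
    (mul_le_of_le_one_left dist_nonneg (pow_le_one₀ c.2 hc))

lemma iterate_mem_iUnion_of_mem_deepSet (hf : ∀ i, LipschitzOnWith c f (U i)) (hc : c ≤ 1)
    (hx : x ∈ deepSet f U δ) (hxy : dist x y < δ) (n : ℕ) : f^[n] y ∈ ⋃ i, U i := by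
  obtain ⟨i, hi⟩ := hx n
  exact mem_iUnion_of_mem i
    (hi (mem_ball'.2 ((dist_iterate_le_dist_of_mem_deepSet hf hc hx hxy n).trans_lt hxy)))

lemma tendsto_dist_iterate_of_mem_deepSet (hf : ∀ i, LipschitzOnWith c f (U i)) (hc : c < 1)
    (hx : x ∈ deepSet f U δ) (hxy : dist x y < δ) :
    Tendsto (fun n => dist (f^[n] x) (f^[n] y)) atTop (𝓝 0) := by
  refine squeeze_zero (fun _ => dist_nonneg)
    (dist_iterate_le_of_mem_deepSet hf hc.le hx hxy) ?_
  simpa using (tendsto_pow_atTop_nhds_zero_of_lt_one c.2 hc).mul_const (dist x y)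

lemma eq_of_mem_deepSet_of_mem_periodicPts (hf : ∀ i, LipschitzOnWith c f (U i)) (hc : c < 1)
    (hx : x ∈ deepSet f U δ) (hxp : x ∈ Function.periodicPts f) (hyp : y ∈ Function.periodicPts f)
    (hxy : dist x y < δ) : x = y := by
  obtain ⟨p, hp, hxp⟩ := hxp
  obtain ⟨q, hq, hyq⟩ := hyp
  have hle := dist_iterate_le_of_mem_deepSet hf hc.le hx hxy (p * q)
  rw [(hxp.mul_const q).eq, (hyq.const_mul p).eq] at hle
  have hpow : (c : ℝ) ^ (p * q) < 1 := pow_lt_one₀ c.2 hc (Nat.mul_pos hp hq).ne'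
  by_contra hne
  exact (mul_lt_of_lt_one_left (dist_pos.2 hne) hpow).not_ge hle

lemma finite_deepSet_inter_periodicPts (hf : ∀ i, LipschitzOnWith c f (U i)) (hc : c < 1)
    (hδ : 0 < δ) {K : Set X} (hK : TotallyBounded K) :
    (deepSet f U δ ∩ K ∩ Function.periodicPts f).Finite := by
  obtain ⟨t, ht, hcover⟩ := totallyBounded_iff.1 hK (δ / 2) (half_pos hδ)
  refine (ht.biUnion (t := fun a => deepSet f U δ ∩ Function.periodicPts f ∩ ball a (δ / 2))
    fun a _ => Subsingleton.finite ?_).subset ?_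
  · rintro x ⟨⟨hx, hxp⟩, hxa⟩ y ⟨⟨-, hyp⟩, hya⟩
    refine eq_of_mem_deepSet_of_mem_periodicPts hf hc hx hxp hyp ?_
    rw [mem_ball] at hxa hya
    linarith [dist_triangle_right x y a]
  · rintro x ⟨⟨hx, hxK⟩, hxp⟩
    obtain ⟨a, ha, hxa⟩ := mem_iUnion₂.1 (hcover hxK)
    exact mem_iUnion₂.2 ⟨a, ha, ⟨hx, hxp⟩, hxa⟩

lemma exists_tendsto_iterate_iterate_of_mem_deepSet [CompleteSpace X]
    (hf : ∀ i, LipschitzOnWith c f (U i)) (hc : c < 1) (hx : x ∈ deepSet f U δ) {p : ℕ}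
    (hp : 0 < p) (hclose : dist x (f^[p] x) < δ) :
    ∃ w, Tendsto (fun k => (f^[p])^[k] x) atTop (𝓝 w) := by
  refine cauchySeq_tendsto_of_complete
    (cauchySeq_of_le_geometric ((c : ℝ) ^ p) δ (pow_lt_one₀ c.2 hc hp.ne') fun k => ?_)
  rw [Function.iterate_succ_apply, ← Function.iterate_mul, ← pow_mul]
  exact (dist_iterate_le_of_mem_deepSet hf hc.le hx hclose (p * k)).trans
    (by rw [mul_comm δ]; gcongr)

lemma exists_isPeriodicPt_of_dist_iterate_lt [CompleteSpace X]
    (hf : ∀ i, LipschitzOnWith c f (U i)) (hc : c < 1) (hx : x ∈ deepSet f U δ) {p : ℕ}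
    (hp : 0 < p) (hclose : dist x (f^[p] x) < δ) :
    ∃ w, Function.IsPeriodicPt f p w ∧ (∀ n, f^[n] w ∈ ⋃ i, U i) ∧
      ∃ M, Tendsto (fun n => dist (f^[n] (f^[M] x)) (f^[n] w)) atTop (𝓝 0) := by
  obtain ⟨w, hw⟩ := exists_tendsto_iterate_iterate_of_mem_deepSet hf hc hx hp hclose
  have hdeep (k : ℕ) : (f^[p])^[k] x ∈ deepSet f U δ := by
    rw [← Function.iterate_mul]
    exact iterate_mem_deepSet hx _
  have hnear : ∀ᶠ k in atTop, dist ((f^[p])^[k] x) w < δ :=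
    tendsto_nhds.1 hw δ (dist_nonneg.trans_lt hclose)
  have hwp : Tendsto (fun k => (f^[p])^[k + 1] x) atTop (𝓝 (f^[p] w)) := by
    refine tendsto_iff_dist_tendsto_zero.2
      (squeeze_zero' (.of_forall fun _ => dist_nonneg) ?_ (tendsto_iff_dist_tendsto_zero.1 hw))
    filter_upwards [hnear] with k hk
    rw [Function.iterate_succ_apply']
    exact dist_iterate_le_dist_of_mem_deepSet hf hc.le (hdeep k) hk p
  obtain ⟨k, hk⟩ := hnear.exists
  refine ⟨w, tendsto_nhds_unique hwp ((tendsto_add_atTop_iff_nat 1).2 hw),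
    iterate_mem_iUnion_of_mem_deepSet hf hc.le (hdeep k) hk, p * k, ?_⟩
  rw [Function.iterate_mul]
  exact tendsto_dist_iterate_of_mem_deepSet hf hc (hdeep k) hk

end PiecewiseContraction

section Geometry

lemma eq_of_mem_convexHull_range_of_le {E ι : Type*} [AddCommGroup E] [Module ℝ E]
    (g : E →ₗ[ℝ] ℝ) {v : ι → E} {k : ι} (hk : ∀ j ≠ k, g (v k) < g (v j)) {x : E}
    (hx : x ∈ convexHull ℝ (range v)) (hgx : g x ≤ g (v k)) : x = v k := by
  have hconvex : Convex ℝ (insert (v k) {y | g (v k) < g y}) := by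
    refine convex_iff_pairwise_pos.2 fun y hy z hz hne a b ha hb hab => Or.inr ?_
    rw [mem_ofPred_eq, map_add, map_smul, map_smul, smul_eq_mul, smul_eq_mul]
    obtain rfl : b = 1 - a := by linarith
    rcases hy with rfl | (hy : g (v k) < g y) <;> rcases hz with rfl | (hz : g (v k) < g z)
    · exact absurd rfl hne
    · nlinarith
    · nlinarith
    · nlinarith
  refine (convexHull_min (range_subset_iff.2 fun j => ?_) hconvex hx).resolve_right hgx.not_gt
  obtain rfl | hj := eq_or_ne j k
  exacts [mem_insert _ _, mem_insert_of_mem _ (hk j hj)]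

/-- `cross u` as a linear functional; for `z ∈ cone v k` the functional with `u = v k - z` attains
its minimum over the polygon at the vertex `v k` only. -/
def crossLin (u : ℂ) : ℂ →ₗ[ℝ] ℝ := u.re • Complex.imLm - u.im • Complex.reLm

lemma crossLin_apply (u z : ℂ) : crossLin u z = cross u z := rfl

lemma crossLin_self (u : ℂ) : crossLin u u = 0 := by
  rw [crossLin_apply, cross, mul_comm, sub_self]

variable {d : ℕ} {v : Fin d → ℂ} {j k : Fin d} {lam : ℝ} {x z : ℂ}

lemma mem_cone_iff :
    z ∈ cone v k ↔ ∀ j ≠ k, crossLin (v k - z) (v k) < crossLin (v k - z) (v j) := by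
  refine forall₂_congr fun j _ => ?_
  rw [← crossLin_apply, ← sub_add_sub_cancel (v j) (v k) z, map_add, crossLin_self, add_zero,
    map_sub, sub_pos]

lemma eq_of_mem_cone_of_mem_cone (hj : z ∈ cone v j) (hk : z ∈ cone v k) : j = k := by
  by_contra hne
  have hjk := hj k (Ne.symm hne)
  have hkj := hk j hne
  simp only [cross] at hjk hkj
  linarith

lemma eq_of_vertex_eq_of_mem_cone (hz : z ∈ cone v k) (h : v j = v k) : j = k := by
  by_contra hne
  have hlt := mem_cone_iff.1 hz j hne
  rw [h] at hlt
  exact lt_irrefl _ hlt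

lemma isOpen_cone (v : Fin d → ℂ) (k : Fin d) : IsOpen (cone v k) := by
  simp only [cone, ofPred_forall]
  refine isOpen_iInter_of_finite fun j => isOpen_iInter_of_finite fun _ =>
    isOpen_lt continuous_const ?_
  unfold cross
  fun_prop

lemma mem_cone_of_mem_closure_of_mem_iUnion (hz : z ∈ closure (cone v k))
    (h : z ∈ ⋃ j, cone v j) : z ∈ cone v k := by
  obtain ⟨j, hj⟩ := mem_iUnion.1 h
  obtain ⟨y, hyj, hyk⟩ := mem_closure_iff.1 hz _ (isOpen_cone v j) hj
  exact eq_of_mem_cone_of_mem_cone hyj hyk ▸ hj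

/-- The affine contraction `z ↦ -λ z + (1+λ) v_k` that the billiard map applies on the `k`-th cone,
considered on the whole plane. -/
def branch (v : Fin d → ℂ) (lam : ℝ) (k : Fin d) (z : ℂ) : ℂ :=
  -(lam : ℂ) * z + (1 + (lam : ℂ)) * v k

lemma branch_eq_add_smul (v : Fin d → ℂ) (lam : ℝ) (k : Fin d) (z : ℂ) :
    branch v lam k z = v k + lam • (v k - z) := by
  rw [branch, Complex.real_smul]
  ring

lemma branch_vertex (v : Fin d → ℂ) (lam : ℝ) (k : Fin d) : branch v lam k (v k) = v k := by
  rw [branch_eq_add_smul, sub_self, smul_zero, add_zero]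

lemma continuous_branch (v : Fin d → ℂ) (lam : ℝ) (k : Fin d) : Continuous (branch v lam k) := by
  unfold branch
  fun_prop

lemma billiardMap_of_mem_cone (hz : z ∈ cone v k) : billiardMap v lam z = branch v lam k z := by
  have h : ∃ k, z ∈ cone v k := ⟨k, hz⟩
  rw [billiardMap, dif_pos h, eq_of_mem_cone_of_mem_cone h.choose_spec hz, branch]

lemma lipschitzOnWith_billiardMap (hlam : 0 ≤ lam) (k : Fin d) :
    LipschitzOnWith lam.toNNReal (billiardMap v lam) (cone v k) := by
  refine LipschitzOnWith.of_dist_le_mul fun x hx y hy => ?_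
  rw [billiardMap_of_mem_cone hx, billiardMap_of_mem_cone hy, branch_eq_add_smul,
    branch_eq_add_smul, dist_add_left, dist_smul₀, dist_sub_left, Real.norm_of_nonneg hlam,
    Real.coe_toNNReal _ hlam]

lemma billiardMap_notMem_cone [Nontrivial (Fin d)] (hlam : 0 ≤ lam) (hz : z ∈ cone v k) :
    billiardMap v lam z ∉ cone v k := by
  intro hTz
  obtain ⟨i, hi⟩ := exists_ne k
  have hreflect : v k - billiardMap v lam z = -lam • (v k - z) := by
    rw [billiardMap_of_mem_cone hz, branch_eq_add_smul, neg_smul]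
    ring
  have hpos := mem_cone_iff.1 hz i hi
  have hneg := mem_cone_iff.1 hTz i hi
  simp only [hreflect, crossLin_apply, cross, Complex.smul_re, Complex.smul_im,
    smul_eq_mul] at hpos hneg
  nlinarith

lemma eq_vertex_of_branch_mem_polygonSet (hlam : 0 < lam) (hx : x ∈ closure (cone v k))
    (hsing : x ∉ singSet v) (hbranch : branch v lam k x ∈ polygonSet v) : x = v k := by
  suffices hvertex : branch v lam k x = v k by
    rw [branch_eq_add_smul, add_eq_left, smul_eq_zero_iff_right hlam.ne'] at hvertex
    exact (sub_eq_zero.1 hvertex).symm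
  have hmin {u : ℂ} (hu : ∀ j ≠ k, crossLin u (v k) < crossLin u (v j))
      (hle : crossLin u (v k - x) ≤ 0) : branch v lam k x = v k := by
    refine eq_of_mem_convexHull_range_of_le _ hu hbranch ?_
    rw [branch_eq_add_smul, map_add, map_smul, smul_eq_mul]
    nlinarith
  by_cases hcone : x ∈ ⋃ j, cone v j
  · exact hmin (mem_cone_iff.1 (mem_cone_of_mem_closure_of_mem_iUnion hx hcone))
      (crossLin_self _).le
  · have hxP : x ∈ polygonSet v := by
      by_contra h
      exact hsing ⟨h, fun j hj => hcone (mem_iUnion_of_mem j hj)⟩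
    obtain ⟨z, hz⟩ := closure_nonempty_iff.1 ⟨x, hx⟩
    by_cases hle : crossLin (v k - z) (v k - x) ≤ 0
    · exact hmin (mem_cone_iff.1 hz) hle
    · rw [eq_of_mem_convexHull_range_of_le _ (mem_cone_iff.1 hz) hxP, branch_vertex]
      rw [map_sub] at hle
      linarith

end Geometry

section Attractor

variable {d : ℕ} {v : Fin d → ℂ} {lam : ℝ} {s K : Set ℂ} {x z : ℂ}

lemma nonSingular_iterate (hz : NonSingular v lam z) (m : ℕ) :
    NonSingular v lam ((billiardMap v lam)^[m] z) := by
  intro n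
  rw [← Function.iterate_add_apply]
  exact hz (n + m)

lemma exists_limit_and_cell {α : Type*} (hK : IsCompact K) {F : Ultrafilter α}
    {u : α → ℂ} (huK : ∀ᶠ a in (F : Filter α), u a ∈ K)
    (hu : ∀ᶠ a in (F : Filter α), u a ∈ ⋃ k, cone v k) :
    ∃ y k, Tendsto u F (𝓝 y) ∧ (∀ᶠ a in (F : Filter α), u a ∈ cone v k) ∧
      Tendsto (fun a => billiardMap v lam (u a)) F (𝓝 (branch v lam k y)) := by
  obtain ⟨y, -, hy⟩ := hK.ultrafilter_le_nhds (F.map u) (le_principal_iff.2 huK)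
  obtain ⟨k, -, hk⟩ := (Ultrafilter.eventually_exists_mem_iff finite_univ).1
    (hu.mono fun a ha => (mem_iUnion.1 ha).imp fun k hk => ⟨mem_univ k, hk⟩)
  refine ⟨y, k, hy, hk, (((continuous_branch v lam k).tendsto y).comp hy).congr' ?_⟩
  filter_upwards [hk] with a ha using (billiardMap_of_mem_cone ha).symm

lemma exists_vertex_of_tendsto_mem_polygonSet (hlam : 0 < lam) (hK : IsCompact K)
    (hs : ∀ z ∈ s, NonSingular v lam z) (hsK : ∀ n, MapsTo (billiardMap v lam)^[n] s K)
    (hsep : Disjoint (omegaLimit atTop (fun n => (billiardMap v lam)^[n]) s) (singSet v))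
    {α : Type*} {F : Ultrafilter α} {t : α → ℕ} {u : α → ℂ} (ht : Tendsto t F atTop)
    (hu : ∀ᶠ a in (F : Filter α), u a ∈ s)
    (hlim : Tendsto (fun a => (billiardMap v lam)^[t a] (u a)) F (𝓝 x)) (hx : x ∈ polygonSet v) :
    ∃ k, v k = x ∧ Tendsto (fun a => (billiardMap v lam)^[t a - 1] (u a)) F (𝓝 x) ∧
      ∀ᶠ a in (F : Filter α), (billiardMap v lam)^[t a - 1] (u a) ∈ cone v k := by
  obtain ⟨y, k, hy, hk, hTy⟩ := exists_limit_and_cell (lam := lam) hK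
    (hu.mono fun a ha => hsK (t a - 1) ha) (hu.mono fun a ha => hs (u a) ha (t a - 1))
  have hsing : y ∉ singSet v := disjoint_left.1 hsep
    (mem_omegaLimit_of_tendsto ((tendsto_sub_atTop_nat 1).comp ht) hu hy)
  have hstep : ∀ᶠ a in (F : Filter α), billiardMap v lam ((billiardMap v lam)^[t a - 1] (u a)) =
      (billiardMap v lam)^[t a] (u a) := by
    filter_upwards [ht.eventually_ge_atTop 1] with a ha
    rw [← Function.iterate_succ_apply' (billiardMap v lam), Nat.succ_eq_add_one,
      Nat.sub_add_cancel ha]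
  obtain rfl : branch v lam k y = x := tendsto_nhds_unique (hTy.congr' hstep) hlim
  obtain rfl : y = v k :=
    eq_vertex_of_branch_mem_polygonSet hlam (mem_closure_of_tendsto hy hk) hsing hx
  rw [branch_vertex]
  exact ⟨k, rfl, hy, hk⟩

lemma omegaLimit_subset_iUnion_cone [Nontrivial (Fin d)] (hlam : 0 < lam) (hK : IsCompact K)
    (hs : ∀ z ∈ s, NonSingular v lam z) (hsK : ∀ n, MapsTo (billiardMap v lam)^[n] s K)
    (hsep : Disjoint (omegaLimit atTop (fun n => (billiardMap v lam)^[n]) s) (singSet v)) :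
    omegaLimit atTop (fun n => (billiardMap v lam)^[n]) s ⊆ ⋃ k, cone v k := by
  intro x hx
  by_contra hxcone
  have hxP : x ∈ polygonSet v := by
    by_contra h
    exact disjoint_left.1 hsep hx ⟨h, fun k hk => hxcone (mem_iUnion_of_mem k hk)⟩
  obtain ⟨F, hF, hFs, hlim⟩ := exists_ultrafilter_of_mem_omegaLimit hx
  obtain ⟨k, rfl, hlim₁, hcone₁⟩ :=
    exists_vertex_of_tendsto_mem_polygonSet hlam hK hs hsK hsep hF hFs hlim hxP
  have hF₁ : Tendsto (fun q : ℕ × ℂ => q.1 - 1) F atTop := (tendsto_sub_atTop_nat 1).comp hF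
  obtain ⟨j, hjk, -, hcone₂⟩ :=
    exists_vertex_of_tendsto_mem_polygonSet hlam hK hs hsK hsep hF₁ hFs hlim₁ hxP
  obtain ⟨q, ⟨hq₁, hq₂⟩, hq⟩ :=
    ((hcone₁.and hcone₂).and (hF₁.eventually_ge_atTop 1)).exists
  obtain rfl : k = j := eq_of_vertex_eq_of_mem_cone hq₂ hjk.symm
  rw [← Nat.sub_add_cancel hq, Function.iterate_succ_apply'] at hq₁
  exact billiardMap_notMem_cone hlam.le hq₂ hq₁

end Attractor

section Absorption

variable {d : ℕ} {v : Fin d → ℂ} {lam r : ℝ} {z : ℂ}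

/-- The radius `(1+λ)‖v‖/(1-λ)`, the fixed point of the bound `‖T z‖ ≤ λ‖z‖ + (1+λ)‖v‖` for the
billiard map `T`: larger discs around `0` absorb all non-singular orbits. -/
def absorbingRadius (v : Fin d → ℂ) (lam : ℝ) : ℝ := (1 + lam) * ‖v‖ / (1 - lam)

lemma norm_billiardMap_sub_le (hlam0 : 0 ≤ lam) (hlam1 : lam < 1) (hz : z ∈ ⋃ k, cone v k) :
    ‖billiardMap v lam z‖ - absorbingRadius v lam ≤ lam * (‖z‖ - absorbingRadius v lam) := by
  obtain ⟨k, hk⟩ := mem_iUnion.1 hz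
  have hradius : (1 - lam) * absorbingRadius v lam = (1 + lam) * ‖v‖ :=
    mul_div_cancel₀ _ (sub_pos.2 hlam1).ne'
  have hbranch : ‖billiardMap v lam z‖ ≤ lam * ‖z‖ + (1 + lam) * ‖v‖ := by
    have hsplit : branch v lam k z = (-lam) • z + (1 + lam) • v k := by simp [branch]
    rw [billiardMap_of_mem_cone hk, hsplit]
    refine (norm_add_le _ _).trans ?_
    rw [norm_smul, norm_smul, norm_neg, Real.norm_of_nonneg hlam0,
      Real.norm_of_nonneg (by linarith)]
    gcongr
    exact norm_le_pi_norm v k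
  linarith

lemma norm_iterate_billiardMap_sub_le (hlam0 : 0 ≤ lam) (hlam1 : lam < 1)
    (hz : NonSingular v lam z) (n : ℕ) :
    ‖(billiardMap v lam)^[n] z‖ - absorbingRadius v lam ≤
      lam ^ n * (‖z‖ - absorbingRadius v lam) := by
  induction n with
  | zero => simp
  | succ n ih =>
    rw [Function.iterate_succ_apply', pow_succ', mul_assoc]
    exact (norm_billiardMap_sub_le hlam0 hlam1 (hz n)).trans
      (mul_le_mul_of_nonneg_left ih hlam0)

lemma iterate_billiardMap_mem_closedBall (hlam0 : 0 ≤ lam) (hlam1 : lam < 1)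
    (hr : absorbingRadius v lam ≤ r) (hz : NonSingular v lam z) (hzr : z ∈ closedBall 0 r) (n : ℕ) :
    (billiardMap v lam)^[n] z ∈ closedBall 0 r := by
  rw [mem_closedBall_zero_iff] at hzr ⊢
  have hiter := norm_iterate_billiardMap_sub_le hlam0 hlam1 hz n
  nlinarith [pow_nonneg hlam0 n, pow_le_one₀ hlam0 hlam1.le (n := n)]

lemma eventually_iterate_billiardMap_mem_closedBall (hlam0 : 0 ≤ lam) (hlam1 : lam < 1)
    (hr : absorbingRadius v lam < r) (hz : NonSingular v lam z) :
    ∀ᶠ n in atTop, (billiardMap v lam)^[n] z ∈ closedBall 0 r := by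
  have hlim : Tendsto (fun n : ℕ => lam ^ n * (‖z‖ - absorbingRadius v lam)) atTop (𝓝 0) := by
    simpa using (tendsto_pow_atTop_nhds_zero_of_lt_one hlam0 hlam1).mul_const
      (‖z‖ - absorbingRadius v lam)
  filter_upwards [hlim.eventually_le_const (sub_pos.2 hr)] with n hn
  rw [mem_closedBall_zero_iff]
  linarith [norm_iterate_billiardMap_sub_le hlam0 hlam1 hz n]

end Absorption

section LimitSet

variable {d : ℕ} {vP v : Fin d → ℂ} {lP ε lam : ℝ} {q : (Fin d → ℂ) × ℝ} {z : ℂ}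

lemma hpt_succ (v : Fin d → ℂ) (lam : ℝ) (k : ℕ → Fin d) (n : ℕ) :
    Hpt v lam (fun j : Fin (n + 1) => k j) =
      branch v lam (k n) (Hpt v lam fun j : Fin n => k j) := by
  have hpow (j : Fin n) : (-(lam : ℂ)) ^ (n + 1 - (j : ℕ) - 1) =
      -(lam : ℂ) * (-(lam : ℂ)) ^ (n - (j : ℕ) - 1) := by
    rw [← pow_succ', show n + 1 - (j : ℕ) - 1 = n - j - 1 + 1 by omega]
  simp only [Hpt, branch, Fin.sum_univ_castSucc, Fin.val_castSucc, Fin.val_last, hpow, mul_assoc,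
    ← Finset.mul_sum, Nat.add_sub_cancel_left, Nat.sub_self, pow_zero, one_mul]
  ring

lemma iterate_billiardMap_eq_add_hpt {k : ℕ → Fin d}
    (hk : ∀ n, (billiardMap v lam)^[n] z ∈ cone v (k n)) (n : ℕ) :
    (billiardMap v lam)^[n] z = (-(lam : ℂ)) ^ n * z + Hpt v lam (fun j : Fin n => k j) := by
  induction n with
  | zero => simp [Hpt]
  | succ n ih =>
    rw [Function.iterate_succ_apply', billiardMap_of_mem_cone (hk n), ih, hpt_succ, branch, branch]
    ring

lemma exists_mem_itinSet_dist_hpt_le (hq : q ∈ Delta vP lP ε) (hlam : 0 ≤ q.2)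
    (hz : NonSingular q.1 q.2 z) (hzK : ∀ n, (billiardMap q.1 q.2)^[n] z ∈ Keps vP lP ε) (n : ℕ) :
    ∃ i ∈ ItinSet vP lP ε n,
      dist (Hpt q.1 q.2 i) ((billiardMap q.1 q.2)^[n] z) ≤ q.2 ^ n * rEps vP lP ε := by
  choose k hk using fun n => mem_iUnion.1 (hz n)
  refine ⟨fun j => k j, ⟨q, hq, z, fun j => ⟨hk j, hzK j⟩⟩, ?_⟩
  rw [iterate_billiardMap_eq_add_hpt hk, dist_comm, dist_add_self_left, norm_mul, norm_pow,
    norm_neg, Complex.norm_of_nonneg hlam]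
  exact mul_le_mul_of_nonneg_left (mem_closedBall_zero_iff.1 (hzK 0)) (pow_nonneg hlam n)

lemma omegaLimit_subset_lamSet (hq : q ∈ Delta vP lP ε) (hlam0 : 0 ≤ q.2) (hlam1 : q.2 < 1)
    {s : Set ℂ} (hs : ∀ z ∈ s, NonSingular q.1 q.2 z)
    (hsK : ∀ n, MapsTo (billiardMap q.1 q.2)^[n] s (Keps vP lP ε)) :
    omegaLimit atTop (fun n => (billiardMap q.1 q.2)^[n]) s ⊆ LamSet vP lP ε q.1 q.2 := by
  intro x hx
  refine mem_iInter₂.2 fun m _ => Metric.mem_closure_iff.2 fun e he => ?_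
  have hsmall : Tendsto (fun n : ℕ => q.2 ^ n * rEps vP lP ε) atTop (𝓝 0) := by
    simpa using (tendsto_pow_atTop_nhds_zero_of_lt_one hlam0 hlam1).mul_const (rEps vP lP ε)
  obtain ⟨n, ⟨z, hz, hzx⟩, hne, hmn⟩ :=
    (((mem_omegaLimit_iff_frequently _ _ _ _).1 hx _ (ball_mem_nhds x (half_pos he))).and_eventually
      ((hsmall.eventually_lt_const (half_pos he)).and (eventually_ge_atTop m))).exists
  obtain ⟨i, hi, hdist⟩ := exists_mem_itinSet_dist_hpt_le hq hlam0 (hs z hz) (fun n => hsK n hz) n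
  refine ⟨_, ⟨n, hmn, i, hi, rfl⟩, ?_⟩
  rw [mem_preimage, mem_ball] at hzx
  rw [dist_comm]
  linarith [dist_triangle (Hpt q.1 q.2 i) ((billiardMap q.1 q.2)^[n] z) x]

lemma norm_le_bEps {w : Fin d → ℂ} (hw : w ∈ ball vP ε) : ‖w‖ ≤ bEps vP ε := by
  refine le_csSup ⟨‖vP‖ + ε, ?_⟩ (mem_image_of_mem _ hw)
  rintro _ ⟨u, hu, rfl⟩
  rw [mem_ball, dist_eq_norm] at hu
  linarith [norm_le_norm_add_norm_sub' u vP]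

lemma bEps_pos [Nonempty (Fin d)] (hε : 0 < ε) : 0 < bEps vP ε := by
  obtain ⟨w, hw, hw0⟩ := (dense_compl_singleton (0 : Fin d → ℂ)).inter_open_nonempty _ isOpen_ball
    (nonempty_ball.2 hε : (ball vP ε).Nonempty)
  exact (norm_pos_iff.2 hw0).trans_le (norm_le_bEps hw)

lemma absorbingRadius_lt_rEps [Nonempty (Fin d)] (hq : q ∈ Delta vP lP ε) (hlam : 0 < q.2)
    (hupp : lP + ε < 1) : absorbingRadius q.1 q.2 < rEps vP lP ε := by
  obtain ⟨hv, -, hlt⟩ := hq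
  change q.2 < aEps lP ε at hlt
  have hb : 0 < bEps vP ε := bEps_pos (nonempty_ball.1 ⟨_, hv⟩)
  have ha : 0 < 1 - aEps lP ε := sub_pos.2 hupp
  have hnum : 0 < (1 + aEps lP ε) * bEps vP ε := mul_pos (by linarith) hb
  calc absorbingRadius q.1 q.2
    _ ≤ (1 + q.2) * bEps vP ε / (1 - q.2) := by
      unfold absorbingRadius
      have hnorm := norm_le_bEps hv
      gcongr
      linarith
    _ < (1 + aEps lP ε) * bEps vP ε / (1 - aEps lP ε) := by
      refine div_lt_div₀ ?_ ?_ hnum.le ha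
      · gcongr
      · linarith
    _ ≤ (1 + aEps lP ε) * bEps vP ε / (1 - aEps lP ε) ^ 2 := by
      gcongr
      exact pow_le_of_le_one ha.le (by linarith) two_ne_zero
    _ = rEps vP lP ε := by rw [rEps, mul_comm (bEps vP ε)]

end LimitSet

section AsymptoticPeriodicity

lemma exists_isPeriodicPt_omegaSet_eq {ι : Type*} {f : ℂ → ℂ} {U : ι → Set ℂ} {c : ℝ≥0} {δ : ℝ}
    {K : Set ℂ} {z : ℂ} (hf : ∀ i, LipschitzOnWith c f (U i)) (hc : c < 1) (hδ : 0 < δ)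
    (hK : IsCompact K) (hz : ∀ᶠ n in atTop, f^[n] z ∈ deepSet f U δ ∩ K) :
    ∃ w, (∀ n, f^[n] w ∈ ⋃ i, U i) ∧ (∃ p, 1 ≤ p ∧ f^[p] w = w) ∧
      omegaSet f z = range fun n => f^[n] w := by
  obtain ⟨hdeep, hzK⟩ := eventually_and.1 hz
  obtain ⟨N, hN⟩ := eventually_atTop.1 hdeep
  obtain ⟨m, hm, n, hmn, hclose⟩ := exists_lt_dist_iterate_lt hK hzK hδ N
  rw [← Nat.sub_add_cancel hmn.le, Function.iterate_add_apply] at hclose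
  obtain ⟨w, hw, hwU, M, hM⟩ :=
    exists_isPeriodicPt_of_dist_iterate_lt hf hc (hN m hm) (Nat.sub_pos_of_lt hmn) hclose
  refine ⟨w, hwU, ⟨n - m, Nat.sub_pos_of_lt hmn, hw⟩, ?_⟩
  rw [← omegaSet_of_isPeriodicPt (Nat.sub_pos_of_lt hmn) hw, ← omegaSet_eq_of_tendsto_dist hM,
    omegaSet_iterate, omegaSet_iterate]

variable {d : ℕ} [Nontrivial (Fin d)] {v : Fin d → ℂ} {lam r : ℝ}

lemma exists_eventually_iterate_mem_deepSet (hlam0 : 0 < lam) (hlam1 : lam < 1)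
    (hr : absorbingRadius v lam < r)
    (hsep : Disjoint (omegaLimit atTop (fun n => (billiardMap v lam)^[n])
      ({z | NonSingular v lam z} ∩ closedBall 0 r)) (singSet v)) :
    ∃ δ > 0, ∀ z, NonSingular v lam z → ∀ᶠ n in atTop,
      (billiardMap v lam)^[n] z ∈ deepSet (billiardMap v lam) (cone v) δ ∩ closedBall 0 r := by
  have hmaps (n : ℕ) : MapsTo (billiardMap v lam)^[n]
      ({z | NonSingular v lam z} ∩ closedBall 0 r) (closedBall 0 r) :=
    fun z hz => iterate_billiardMap_mem_closedBall hlam0.le hlam1 hr.le hz.1 hz.2 n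
  obtain ⟨δ, hδ, hball⟩ := exists_ball_subset_of_omegaLimit_subset_iUnion
    (isCompact_closedBall 0 r) (.of_forall hmaps) (isOpen_cone v)
    (omegaLimit_subset_iUnion_cone hlam0 (isCompact_closedBall 0 r) (fun z hz => hz.1) hmaps hsep)
  refine ⟨δ, hδ, fun z hz => ?_⟩
  have habsorb := eventually_iterate_billiardMap_mem_closedBall hlam0.le hlam1 hr hz
  obtain ⟨N, hN⟩ := habsorb.exists
  refine (eventually_iterate_mem_deepSet ?_).and habsorb
  rw [← eventually_iterate_iterate_iff (P := fun y => ∃ k, ball y δ ⊆ cone v k) N]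
  exact hball.mono fun n hn => hn _ ⟨nonSingular_iterate hz N, hN⟩

theorem asymptoticallyPeriodic_of_disjoint_omegaLimit_singSet (hlam0 : 0 < lam) (hlam1 : lam < 1)
    (hr : absorbingRadius v lam < r)
    (hsep : Disjoint (omegaLimit atTop (fun n => (billiardMap v lam)^[n])
      ({z | NonSingular v lam z} ∩ closedBall 0 r)) (singSet v)) :
    AsymptoticallyPeriodic v lam := by
  obtain ⟨δ, hδ, htrap⟩ := exists_eventually_iterate_mem_deepSet hlam0 hlam1 hr hsep
  have hlip := lipschitzOnWith_billiardMap (v := v) hlam0.le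
  have hc : lam.toNNReal < 1 := Real.toNNReal_lt_one.2 hlam1
  have hK : IsCompact (closedBall (0 : ℂ) r) := isCompact_closedBall 0 r
  constructor
  · refine (finite_deepSet_inter_periodicPts hlip hc hδ hK.totallyBounded).subset ?_
    rintro z ⟨hz, p, hp, hzp⟩
    exact ⟨forall_iterate_of_isPeriodicPt hp hzp (htrap z hz) 0, p, hp, hzp⟩
  · exact fun z hz => exists_isPeriodicPt_omegaSet_eq hlip hc hδ hK (htrap z hz)

theorem asymptotically_periodic_of_separated_general {vP : Fin d → ℂ} {lP ε : ℝ}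
    {q : (Fin d → ℂ) × ℝ} (hq : q ∈ Delta vP lP ε) (hlam0 : 0 < q.2) (hupp : lP + ε < 1)
    (hsep : LamSet vP lP ε q.1 q.2 ∩ singSet q.1 = ∅) : AsymptoticallyPeriodic q.1 q.2 := by
  have hlam1 : q.2 < 1 := hq.2.2.trans hupp
  have hr : absorbingRadius q.1 q.2 < rEps vP lP ε := absorbingRadius_lt_rEps hq hlam0 hupp
  refine asymptoticallyPeriodic_of_disjoint_omegaLimit_singSet hlam0 hlam1 hr
    ((disjoint_iff_inter_eq_empty.2 hsep).mono_left ?_)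
  exact omegaLimit_subset_lamSet hq hlam0.le hlam1 (fun z hz => hz.1) fun n z hz =>
    iterate_billiardMap_mem_closedBall hlam0.le hlam1 hr.le hz.1 hz.2 n

end AsymptoticPeriodicity

/-- Let `(P, λ) ∈ Δ_ε`. If `Λ_ε(P,λ) ∩ S_P = ∅`, then `T_{P,λ}` is asymptotically
periodic. -/
theorem asymptotically_periodic_of_separated (d : ℕ) [NeZero d] (hd : 3 ≤ d) (vP : Fin d → ℂ) (lP ε : ℝ)
    (hconv : IsConvexPolygon vP) (hε : 0 < ε) (hlow : 0 < lP - ε) (hupp : lP + ε < 1)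
    (hball : ∀ w : Fin d → ℂ, ‖w - vP‖ < ε → IsConvexPolygon w)
    (q : (Fin d → ℂ) × ℝ) (hq : q ∈ Delta vP lP ε)
    (hsep : LamSet vP lP ε q.1 q.2 ∩ singSet q.1 = ∅) :
    AsymptoticallyPeriodic q.1 q.2 := by
  have : Nontrivial (Fin d) := Fin.nontrivial_iff_two_le.2 (by omega)
  exact asymptotically_periodic_of_separated_general hq (hlow.trans hq.2.1) hupp hsep
end
end
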